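/- For every natural number k: (i) for every natural number n with n ≤ 2k+2, the polynomial S_{k+1} divides S_{2k+2−n} + S_n in ℤ[X]; and (ii) for every natural number n, S_{k+1} divides S_{n+2(k+2)} − S_n in ℤ[X]. (These are the reflection relations: additively, the level-k fusion ideal I_k(SU(2)) = (χ_{k+1}) is spanned by the characters χ_{k+1}, χ_{2k+3}, χ_{3k+5}, … together with all χ_{l'} − (−1)^r χ_l where l' is obtained from l ∈ {0,…,k} by r reflections across {k+1, 2k+3, 3k+5, …}.) -/

import Mathlib

/-!
Both claims follow from the recurrence `S (n + 2) = X * S (n + 1) - S n`,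
which is symmetric under reversing the index. The sums `S (m + j) + S (m - j)` satisfy it in `j`
and are multiples of `S m` for `j = 0, 1`, hence for all `j ≤ m`; this is the reflection relation
(`S_dvd_reflection`). The differences `S (n + 2 * (k + 2)) - S n` satisfy the recurrence in `n`,
and for `n = 0, 1` they reduce to the reflection relations at the indices `0` and `1`.
-/

open Polynomial

/-- `S n` is the `n`-th rescaled Chebyshev polynomial of the second kind in `ℤ[X]`,
the monic degree-`n` polynomial with `S n (2 cos θ) = sin ((n+1)θ)/sin θ`;
it is the character of the `(n+1)`-dimensional irreducible `SU(2)`-representation. -/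
noncomputable def S : ℕ → Polynomial ℤ
  | 0 => 1
  | 1 => Polynomial.X
  | n + 2 => Polynomial.X * S (n + 1) - S n

theorem S_add_two (n : ℕ) : S (n + 2) = X * S (n + 1) - S n := by
  rw [S]

/-- Reflection across `m = a + j`, with the lower index `a = m - j` as parameter so that no
truncated subtraction occurs. -/
theorem S_dvd_reflection : ∀ j a : ℕ, S (a + j) ∣ S (a + 2 * j) + S a
  | 0, a => ⟨2, by simp only [mul_zero, add_zero]; ring⟩
  | 1, a => ⟨X, by rw [mul_one, S_add_two]; ring⟩
  | j + 2, a => by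
    have h1 := S_dvd_reflection (j + 1) (a + 1)
    have h0 := S_dvd_reflection j (a + 2)
    rw [show a + 1 + (j + 1) = a + (j + 2) by ring,
      show a + 1 + 2 * (j + 1) = a + 2 * j + 2 + 1 by ring] at h1
    rw [show a + 2 + j = a + (j + 2) by ring, show a + 2 + 2 * j = a + 2 * j + 2 by ring] at h0
    have h := dvd_sub (h1.mul_left X) h0
    convert h using 1
    rw [show a + 2 * (j + 2) = a + 2 * j + 2 + 2 by ring, S_add_two (a + 2 * j + 2), S_add_two a]
    ring

theorem S_dvd_periodicity (k : ℕ) : ∀ n : ℕ, S (k + 1) ∣ S (n + 2 * (k + 2)) - S n := by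
  have h0 : S (k + 1) ∣ S (2 * k + 2) + 1 := by
    have h := S_dvd_reflection (k + 1) 0
    rwa [zero_add, zero_add, show 2 * (k + 1) = 2 * k + 2 by ring, show S 0 = 1 by rw [S]] at h
  have h1 : S (k + 1) ∣ S (2 * k + 1) + X := by
    have h := S_dvd_reflection k 1
    rwa [add_comm 1 k, add_comm 1 (2 * k), show S 1 = X by rw [S]] at h
  -- The index `2 * k + 3` is the next wall of reflection.
  have hw : S (k + 1) ∣ S (2 * k + 3) := by
    convert dvd_sub (h0.mul_left X) h1 using 1
    rw [S_add_two (2 * k + 1)]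
    ring
  have p0 : S (k + 1) ∣ S (2 * k + 4) - 1 := by
    convert dvd_sub (hw.mul_left X) h0 using 1
    rw [S_add_two (2 * k + 2)]
    ring
  intro n
  induction n using Nat.twoStepInduction with
  | zero =>
    rwa [zero_add, show 2 * (k + 2) = 2 * k + 4 by ring, show S 0 = 1 by rw [S]]
  | one =>
    convert dvd_sub (p0.mul_left X) hw using 1
    rw [show 1 + 2 * (k + 2) = 2 * k + 3 + 2 by ring, S_add_two (2 * k + 3),
      show S 1 = X by rw [S]]
    ring
  | more n ih0 ih1 =>
    convert dvd_sub (ih1.mul_left X) ih0 using 1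
    rw [show n + 2 + 2 * (k + 2) = n + 2 * (k + 2) + 2 by ring, S_add_two (n + 2 * (k + 2)),
      S_add_two n, show n + 1 + 2 * (k + 2) = n + 2 * (k + 2) + 1 by ring]
    ring

/-- The reflection relations describing the level-`k` fusion ideal `I_k(SU(2)) = (χ_{k+1})`:
reflection across `k+1` gives `χ_{2k+2-n} + χ_n ∈ I_k`, and periodicity
`χ_{n+2(k+2)} - χ_n ∈ I_k`. -/
theorem fusion_ideal_reflection_relations (k : ℕ) :
    (∀ n : ℕ, n ≤ 2 * k + 2 → S (k + 1) ∣ S (2 * k + 2 - n) + S n) ∧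
      (∀ n : ℕ, S (k + 1) ∣ S (n + 2 * (k + 2)) - S n) := by
  refine ⟨fun n hn => ?_, S_dvd_periodicity k⟩
  -- The relation is symmetric under `n ↦ 2 * k + 2 - n`, so `n` may be on either side of `k + 1`.
  rcases le_total n (k + 1) with h | h
  · have := S_dvd_reflection (k + 1 - n) n
    rwa [show n + (k + 1 - n) = k + 1 by lia,
      show n + 2 * (k + 1 - n) = 2 * k + 2 - n by lia] at this
  · have := S_dvd_reflection (n - (k + 1)) (2 * k + 2 - n)
    rwa [show 2 * k + 2 - n + (n - (k + 1)) = k + 1 by lia,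
      show 2 * k + 2 - n + 2 * (n - (k + 1)) = n by lia, add_comm (S n)] at this
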